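/- arXiv:2310.09264 — 2 statements merged into one kernel-verified Lean document; each statement's English description precedes it below -/
import Mathlib

section
/- Let X be a lattice-ordered group and A, B two sub-ℓ-groups of X. Then A and B are orthogonal (i.e., |a| ⊓ |b| = 1 for all a ∈ A, b ∈ B) if and only if for every a ∈ A and b ∈ B the two equalities a*b = b*a and (a*b) ⊔ 1 = (a ⊔ 1)*(b ⊔ 1) hold. -/
/-!
Two identities carry the argument: `(a / b)⁺ = a / (a ⊓ b)` and `a / (a ⊓ b) * b = a ⊔ b`. By the
second, orthogonal positive elements satisfy `a * b = a ⊔ b`, hence commute. If `|a| ⊓ |b| = 1`,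
then `a⁺` and `a⁻` are orthogonal to `b⁺` and `b⁻`, so that `a * b = (a⁺ * b⁺) / (a⁻ * b⁻)` with
orthogonal numerator and denominator; by the first identity the numerator is `(a * b)⁺`.
Conversely, multiplicativity of the positive part at the pair `|a|`, `|b|⁻¹` reads
`(|a| / |b|)⁺ = |a|`, which by the first identity means `|a| ⊓ |b| = 1`.
-/

section LatticeOrderedGroup

variable {G : Type*} [Lattice G] [Group G] [MulLeftMono G] [MulRightMono G] {a b c : G}

theorem oneLePart_div_eq_div_inf (a b : G) : (a / b)⁺ᵐ = a / (a ⊓ b) := by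
  rw [oneLePart_def, div_inf, div_self', sup_comm]

theorem oneLePart_div_eq_left_iff : (a / b)⁺ᵐ = a ↔ a ⊓ b = 1 := by
  rw [oneLePart_div_eq_div_inf, div_eq_self]

theorem div_inf_mul_eq_sup (a b : G) : a / (a ⊓ b) * b = a ⊔ b := by
  rw [← oneLePart_div_eq_div_inf, oneLePart_def, sup_mul, div_mul_cancel, one_mul]

theorem mul_eq_sup_of_inf_eq_one (h : a ⊓ b = 1) : a * b = a ⊔ b := by
  simpa only [h, div_one] using div_inf_mul_eq_sup a b

theorem commute_of_inf_eq_one (h : a ⊓ b = 1) : Commute a b :=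
  calc
    a * b = a ⊔ b := mul_eq_sup_of_inf_eq_one h
    _ = b ⊔ a := sup_comm a b
    _ = b * a := (mul_eq_sup_of_inf_eq_one (inf_comm b a ▸ h)).symm

theorem inf_mul_eq_one (hb : a ⊓ b = 1) (hc : a ⊓ c = 1) : a ⊓ (b * c) = 1 := by
  have one_le_a : 1 ≤ a := hb ▸ inf_le_left
  have one_le_b : 1 ≤ b := hb ▸ inf_le_right
  have one_le_c : 1 ≤ c := hc ▸ inf_le_right
  have inf_le_c : a ⊓ (b * c) ≤ c :=
    calc
      a ⊓ (b * c) ≤ (a * c) ⊓ (b * c) := inf_le_inf_right _ (le_mul_of_one_le_right' one_le_c)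
      _ = c := by rw [← inf_mul, hb, one_mul]
  exact le_antisymm ((le_inf inf_le_left inf_le_c).trans_eq hc)
    (le_inf one_le_a (one_le_mul one_le_b one_le_c))

theorem mul_inf_eq_one (ha : a ⊓ c = 1) (hb : b ⊓ c = 1) : (a * b) ⊓ c = 1 := by
  rw [inf_comm] at ha hb ⊢
  exact inf_mul_eq_one ha hb

theorem oneLePart_le_mabs (a : G) : a⁺ᵐ ≤ |a|ₘ :=
  sup_le (le_mabs_self a) (one_le_mabs a)

theorem oneLePart_inf_oneLePart_eq_one (h : |a|ₘ ⊓ |b|ₘ = 1) : a⁺ᵐ ⊓ b⁺ᵐ = 1 :=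
  le_antisymm ((inf_le_inf (oneLePart_le_mabs a) (oneLePart_le_mabs b)).trans_eq h)
    (le_inf (one_le_oneLePart a) (one_le_oneLePart b))

theorem oneLePart_inf_leOnePart_eq_one_of_mabs (h : |a|ₘ ⊓ |b|ₘ = 1) : a⁺ᵐ ⊓ b⁻ᵐ = 1 :=
  oneLePart_inf_oneLePart_eq_one (b := b⁻¹) (by rwa [mabs_inv])

theorem commute_oneLePart_of_mabs_inf_mabs_eq_one (h : |a|ₘ ⊓ |b|ₘ = 1) : Commute a⁺ᵐ b := by
  have commute_pos : Commute a⁺ᵐ b⁺ᵐ := commute_of_inf_eq_one (oneLePart_inf_oneLePart_eq_one h)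
  have commute_neg : Commute a⁺ᵐ b⁻ᵐ :=
    commute_of_inf_eq_one (oneLePart_inf_leOnePart_eq_one_of_mabs h)
  simpa only [← div_eq_mul_inv, oneLePart_div_leOnePart] using
    commute_pos.mul_right commute_neg.inv_right

theorem commute_of_mabs_inf_mabs_eq_one (h : |a|ₘ ⊓ |b|ₘ = 1) : Commute a b := by
  have commute_pos : Commute a⁺ᵐ b := commute_oneLePart_of_mabs_inf_mabs_eq_one h
  have commute_neg : Commute a⁻ᵐ b :=
    commute_oneLePart_of_mabs_inf_mabs_eq_one (a := a⁻¹) (by rwa [mabs_inv])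
  simpa only [← div_eq_mul_inv, oneLePart_div_leOnePart] using
    commute_pos.mul_left commute_neg.inv_left

theorem oneLePart_mul_of_mabs_inf_mabs_eq_one (h : |a|ₘ ⊓ |b|ₘ = 1) :
    (a * b)⁺ᵐ = a⁺ᵐ * b⁺ᵐ := by
  have pos_neg : a⁺ᵐ ⊓ b⁻ᵐ = 1 := oneLePart_inf_leOnePart_eq_one_of_mabs h
  have neg_pos : b⁺ᵐ ⊓ a⁻ᵐ = 1 :=
    oneLePart_inf_leOnePart_eq_one_of_mabs (inf_comm |b|ₘ |a|ₘ ▸ h)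
  have neg_neg : a⁻ᵐ ⊓ b⁻ᵐ = 1 :=
    oneLePart_inf_leOnePart_eq_one_of_mabs (a := a⁻¹) (by rwa [mabs_inv])
  have mul_eq_div : a * b = (a⁺ᵐ * b⁺ᵐ) / (a⁻ᵐ * b⁻ᵐ) := by
    rw [← (commute_of_inf_eq_one neg_neg).div_mul_div_comm
      (commute_of_inf_eq_one neg_pos).symm.inv_left, oneLePart_div_leOnePart,
      oneLePart_div_leOnePart]
  have inf_eq_one : (a⁺ᵐ * b⁺ᵐ) ⊓ (a⁻ᵐ * b⁻ᵐ) = 1 :=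
    mul_inf_eq_one (inf_mul_eq_one (oneLePart_inf_leOnePart_eq_one a) pos_neg)
      (inf_mul_eq_one neg_pos (oneLePart_inf_leOnePart_eq_one b))
  rw [mul_eq_div, oneLePart_div_eq_left_iff.2 inf_eq_one]

theorem inf_eq_one_of_oneLePart_mul_inv (ha : 1 ≤ a) (hb : 1 ≤ b)
    (h : (a * b⁻¹)⁺ᵐ = a⁺ᵐ * b⁻¹⁺ᵐ) : a ⊓ b = 1 := by
  rw [oneLePart_eq_self.2 ha, oneLePart_inv, leOnePart_eq_one.2 hb, mul_one,
    ← div_eq_mul_inv] at h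
  exact oneLePart_div_eq_left_iff.1 h

theorem orthogonal_iff_commute_and_pos_mul_general {A B : Set G}
    (hA : ∀ a ∈ A, |a|ₘ ∈ A) (hB : ∀ b ∈ B, |b|ₘ⁻¹ ∈ B) :
    List.TFAE [
      ∀ a ∈ A, ∀ b ∈ B, |a|ₘ ⊓ |b|ₘ = 1,
      ∀ a ∈ A, ∀ b ∈ B, Commute a b ∧ (a * b)⁺ᵐ = a⁺ᵐ * b⁺ᵐ,
      ∀ a ∈ A, ∀ b ∈ B, (a * b)⁺ᵐ = a⁺ᵐ * b⁺ᵐ] := by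
  tfae_have 1 → 2 := fun h a ha b hb ↦
    ⟨commute_of_mabs_inf_mabs_eq_one (h a ha b hb),
      oneLePart_mul_of_mabs_inf_mabs_eq_one (h a ha b hb)⟩
  tfae_have 2 → 3 := fun h a ha b hb ↦ (h a ha b hb).2
  tfae_have 3 → 1 := fun h a ha b hb ↦
    inf_eq_one_of_oneLePart_mul_inv (one_le_mabs a) (one_le_mabs b)
      (h |a|ₘ (hA a ha) |b|ₘ⁻¹ (hB b hb))
  tfae_finish

end LatticeOrderedGroup

/-- Two sub-ℓ-groups `A`, `B` of a lattice-ordered group `X` are orthogonal iff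
for all `a ∈ A`, `b ∈ B` one has `a*b = b*a` and `(a*b)⁺ = a⁺ * b⁺`. -/
theorem orthogonal_iff_commute_and_pos_mul {X : Type*} [Lattice X] [Group X]
    [CovariantClass X X (· * ·) (· ≤ ·)]
    [CovariantClass X X (Function.swap (· * ·)) (· ≤ ·)]
    (A B : Subgroup X)
    (hA : ∀ a b : X, a ∈ A → b ∈ A → a ⊔ b ∈ A)
    (hB : ∀ a b : X, a ∈ B → b ∈ B → a ⊔ b ∈ B) :
    (∀ a : X, a ∈ A → ∀ b : X, b ∈ B → (a ⊔ a⁻¹) ⊓ (b ⊔ b⁻¹) = 1) ↔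
      (∀ a : X, a ∈ A → ∀ b : X, b ∈ B →
        a * b = b * a ∧ (a * b) ⊔ 1 = (a ⊔ 1) * (b ⊔ 1)) :=
  (orthogonal_iff_commute_and_pos_mul_general (A := A) (B := B)
    (fun a ha ↦ hA a a⁻¹ ha (A.inv_mem ha))
    (fun b hb ↦ B.inv_mem (hB b b⁻¹ hb (B.inv_mem hb)))).out 0 1
end

section
/- Let A be a lattice-ordered group, K an ℓ-ideal of A, B a sub-ℓ-group of A, and X̄ a subset of K closed under conjugation by elements of B (i.e., b⁻¹*x*b ∈ X̄ and b*x*b⁻¹ ∈ X̄ for all b ∈ B, x ∈ X̄). Let P = {y ∈ K | |y| ⊓ |x| = 1 for all x ∈ X̄} be the polar of X̄ inside K. Then P is closed under the action of B: (a) b⁻¹*y*b ∈ P for all b ∈ B and y ∈ P; and (b) (y₁*b₁ ⊔ y₂*b₂)*(b₁ ⊔ b₂)⁻¹ ∈ P for all y₁, y₂ ∈ P and b₁, b₂ ∈ B. -/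
/-!
Multiplication distributes over `⊔`, so `y₁ * b₁ ⊔ y₂ * b₂` lies between `(y₁ ⊓ y₂) * (b₁ ⊔ b₂)`
and `(y₁ ⊔ y₂) * (b₁ ⊔ b₂)`; hence `(y₁ * b₁ ⊔ y₂ * b₂) * (b₁ ⊔ b₂)⁻¹` belongs to every convex
sublattice that contains `y₁` and `y₂`. Both an ℓ-ideal and a polar are convex sublattices. Closure
under conjugation holds because conjugation is an automorphism of the ℓ-group, so it preserves
orthogonality.
-/

open Set

section LatticeOrderedGroup

variable {A : Type*} [Lattice A] [Group A]

/-- The polar of a subset `S` of an ℓ-group: the set of all elements orthogonal to every element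
of `S`. The polar of `S` inside a subset `K` is encoded as `K ∩ polar S`. -/
def polar (S : Set A) : Set A :=
  {y | ∀ x ∈ S, |y|ₘ ⊓ |x|ₘ = 1}

variable [MulLeftMono A] [MulRightMono A]

theorem mul_sup_mul_mul_inv_sup_mem_uIcc (y₁ y₂ b₁ b₂ : A) :
    (y₁ * b₁ ⊔ y₂ * b₂) * (b₁ ⊔ b₂)⁻¹ ∈ uIcc y₁ y₂ := by
  constructor
  · rw [le_mul_inv_iff_mul_le, mul_sup]
    gcongr
    exacts [inf_le_left, inf_le_right]
  · rw [mul_inv_le_iff_le_mul, mul_sup]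
    gcongr
    exacts [le_sup_left, le_sup_right]

theorem mabs_le_sup_mabs_of_mem_uIcc {a b x : A} (hx : x ∈ uIcc a b) : |x|ₘ ≤ |a|ₘ ⊔ |b|ₘ := by
  refine mabs_le'.2 ⟨hx.2.trans (sup_le_sup (le_mabs_self a) (le_mabs_self b)), ?_⟩
  calc x⁻¹ ≤ (a ⊓ b)⁻¹ := inv_le_inv_iff.2 hx.1
    _ = a⁻¹ ⊔ b⁻¹ := inv_inf a b
    _ ≤ |a|ₘ ⊔ |b|ₘ := sup_le_sup (inv_le_mabs a) (inv_le_mabs b)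

theorem mul_inf_le_inf_mul_inf {a b c : A} (ha : 1 ≤ a) (hb : 1 ≤ b) (hc : 1 ≤ c) :
    a * b ⊓ c ≤ (a ⊓ c) * (b ⊓ c) := by
  rw [mul_inf, inf_mul, inf_mul]
  refine le_inf (le_inf inf_le_left ?_) (inf_le_right.trans (le_inf ?_ ?_))
  · exact inf_le_right.trans (le_mul_of_one_le_right' hb)
  · exact le_mul_of_one_le_left' ha
  · exact le_mul_of_one_le_left' hc

theorem sup_inf_eq_one_of_inf_eq_one {a b c : A} (hac : a ⊓ c = 1) (hbc : b ⊓ c = 1) :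
    (a ⊔ b) ⊓ c = 1 := by
  have ha : 1 ≤ a := hac ▸ inf_le_left
  have hb : 1 ≤ b := hbc ▸ inf_le_left
  have hc : 1 ≤ c := hac ▸ inf_le_right
  have hab : a ⊔ b ≤ a * b := sup_le (le_mul_of_one_le_right' hb) (le_mul_of_one_le_left' ha)
  refine le_antisymm ?_ (le_inf (ha.trans le_sup_left) hc)
  calc (a ⊔ b) ⊓ c ≤ a * b ⊓ c := inf_le_inf_right c hab
    _ ≤ (a ⊓ c) * (b ⊓ c) := mul_inf_le_inf_mul_inf ha hb hc
    _ = 1 := by rw [hac, hbc, one_mul]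

theorem mabs_conj_inf_mabs_conj (b x y : A) :
    |b * x * b⁻¹|ₘ ⊓ |b * y * b⁻¹|ₘ = b * (|x|ₘ ⊓ |y|ₘ) * b⁻¹ := by
  simp only [mabs, mul_sup, sup_mul, mul_inf, inf_mul, conj_inv]

theorem infClosed_of_supClosed_subgroup {K : Subgroup A} (hK : SupClosed (K : Set A)) :
    InfClosed (K : Set A) := fun a ha b hb ↦ by
  simpa [inv_sup] using K.inv_mem (hK (K.inv_mem ha) (K.inv_mem hb))

theorem uIcc_subset_subgroup {K : Subgroup A} (hsup : SupClosed (K : Set A))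
    (hconvex : (K : Set A).OrdConnected) {a b : A} (ha : a ∈ K) (hb : b ∈ K) :
    uIcc a b ⊆ K :=
  hconvex.out (infClosed_of_supClosed_subgroup hsup ha hb) (hsup ha hb)

theorem uIcc_subset_polar {S : Set A} {y₁ y₂ : A} (h₁ : y₁ ∈ polar S) (h₂ : y₂ ∈ polar S) :
    uIcc y₁ y₂ ⊆ polar S := fun y hy x hx ↦ by
  refine le_antisymm ?_ (le_inf (one_le_mabs y) (one_le_mabs x))
  calc |y|ₘ ⊓ |x|ₘ ≤ (|y₁|ₘ ⊔ |y₂|ₘ) ⊓ |x|ₘ :=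
        inf_le_inf_right _ (mabs_le_sup_mabs_of_mem_uIcc hy)
    _ = 1 := sup_inf_eq_one_of_inf_eq_one (h₁ x hx) (h₂ x hx)

theorem inv_mul_mul_mem_polar {S : Set A} {b y : A} (hb : MapsTo (fun x ↦ b * x * b⁻¹) S S)
    (hy : y ∈ polar S) : b⁻¹ * y * b ∈ polar S := fun x hx ↦ by
  have hconj : |b * (b⁻¹ * y * b) * b⁻¹|ₘ ⊓ |b * x * b⁻¹|ₘ = 1 := by
    simpa [mul_assoc] using hy _ (hb hx)
  rwa [mabs_conj_inf_mabs_conj, conj_eq_one_iff] at hconj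

theorem polar_closed_under_action_general (K : Subgroup A) (hKnormal : K.Normal)
    (hKsup : SupClosed (K : Set A)) (hKconvex : (K : Set A).OrdConnected) (S : Set A) :
    (∀ b : A, MapsTo (fun x ↦ b * x * b⁻¹) S S →
      ∀ y ∈ (K : Set A) ∩ polar S, b⁻¹ * y * b ∈ (K : Set A) ∩ polar S) ∧
    (∀ y₁ ∈ (K : Set A) ∩ polar S, ∀ y₂ ∈ (K : Set A) ∩ polar S, ∀ b₁ b₂ : A,
      (y₁ * b₁ ⊔ y₂ * b₂) * (b₁ ⊔ b₂)⁻¹ ∈ (K : Set A) ∩ polar S) := by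
  constructor
  · rintro b hb y ⟨hyK, hyS⟩
    exact ⟨hKnormal.conj_mem' y hyK b, inv_mul_mul_mem_polar hb hyS⟩
  · rintro y₁ ⟨hK₁, hS₁⟩ y₂ ⟨hK₂, hS₂⟩ b₁ b₂
    have hmem := mul_sup_mul_mul_inv_sup_mem_uIcc y₁ y₂ b₁ b₂
    exact ⟨uIcc_subset_subgroup hKsup hKconvex hK₁ hK₂ hmem, uIcc_subset_polar hS₁ hS₂ hmem⟩

end LatticeOrderedGroup

/-- The polar, inside the kernel `K`, of a subset `X̄` of `K` closed under the action of `B`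
is itself closed under the action of `B`. -/
theorem polar_closed_under_action {A : Type*} [Lattice A] [Group A]
    [CovariantClass A A (· * ·) (· ≤ ·)]
    [CovariantClass A A (Function.swap (· * ·)) (· ≤ ·)]
    (K : Subgroup A) (hKnormal : K.Normal)
    (hKsup : ∀ a b : A, a ∈ K → b ∈ K → a ⊔ b ∈ K)
    (hKconvex : ∀ a x b : A, a ∈ K → b ∈ K → a ≤ x → x ≤ b → x ∈ K)
    (B : Subgroup A)
    (hBsup : ∀ a b : A, a ∈ B → b ∈ B → a ⊔ b ∈ B)
    (Xbar : Set A) (hXK : Xbar ⊆ (K : Set A))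
    (hXconj : ∀ b : A, b ∈ B → ∀ x ∈ Xbar, b⁻¹ * x * b ∈ Xbar ∧ b * x * b⁻¹ ∈ Xbar) :
    let P : Set A := {y : A | y ∈ K ∧ ∀ x ∈ Xbar, (y ⊔ y⁻¹) ⊓ (x ⊔ x⁻¹) = 1}
    (∀ b : A, b ∈ B → ∀ y ∈ P, b⁻¹ * y * b ∈ P) ∧
    (∀ y₁ ∈ P, ∀ y₂ ∈ P, ∀ b₁ : A, b₁ ∈ B → ∀ b₂ : A, b₂ ∈ B →
      (y₁ * b₁ ⊔ y₂ * b₂) * (b₁ ⊔ b₂)⁻¹ ∈ P) := by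
  obtain ⟨hconj, hsup⟩ := polar_closed_under_action_general K hKnormal
    (fun a ha b hb ↦ hKsup a b ha hb) ⟨fun a ha b hb x hx ↦ hKconvex a x b ha hb hx.1 hx.2⟩ Xbar
  exact ⟨fun b hb ↦ hconj b fun x hx ↦ (hXconj b hb x hx).2,
    fun y₁ h₁ y₂ h₂ b₁ _ b₂ _ ↦ hsup y₁ h₁ y₂ h₂ b₁ b₂⟩
end
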